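/- arXiv:2206.06232 — 3 statements merged into one kernel-verified Lean document; each statement's English description precedes it below -/
import Mathlib

section
/- Let L : ℝ^d → ℝ be differentiable and β-smooth with β > 0, and let 0 ≤ γ ≤ 1/β and ρ ≥ 0. For any w ∈ ℝ^d, the full-batch SAM step w⁺ = w − γ∇L(w + ρ∇L(w)) satisfies L(w⁺) ≤ L(w) − γ(1 − ρβ)(1 − (γβ/2)(1 − ρβ))·‖∇L(w)‖². -/
open scoped RealInnerProductSpace

/-!
Write `a = ∇L(w)` and let `b` be the gradient at the ascent point `w + ρ a`. The descent lemma gives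
`L(w - γ b) ≤ L(w) + γ (γβ/2 ‖b‖² - ⟪a, b⟫)`, and smoothness gives `‖b - a‖ ≤ ρβ ‖a‖`. Expand the
bracket in powers of `b - a`: as `γβ ≤ 1`, the coefficient `-(1 - γβ)` of `⟪a, b - a⟫` is
nonpositive and that of `‖b - a‖²` is nonnegative, so both terms are largest at `b = (1 - ρβ) a`,
where the bracket equals `-(1 - ρβ)(1 - (γβ/2)(1 - ρβ)) ‖a‖²`.
-/

open Set
open scoped NNReal

theorem norm_sub_sub_fderiv_le_of_lipschitzOnWith {E F : Type*}
    [NormedAddCommGroup E] [NormedSpace ℝ E] [NormedAddCommGroup F] [NormedSpace ℝ F]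
    {f : E → F} {f' : E → E →L[ℝ] F} {s : Set E} {K : ℝ≥0} (hs : Convex ℝ s)
    (hf : ∀ z ∈ s, HasFDerivWithinAt f (f' z) s z) (hf' : LipschitzOnWith K f' s)
    {x y : E} (hx : x ∈ s) (hy : y ∈ s) :
    ‖f y - f x - f' x (y - x)‖ ≤ K / 2 * ‖y - x‖ ^ 2 := by
  let z : ℝ → E := AffineMap.lineMap x y
  let remainder : ℝ → F := fun t ↦ f (z t) - f x - t • f' x (y - x)
  have z_sub (t : ℝ) : z t - x = t • (y - x) := by
    simp [z, AffineMap.lineMap_apply]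
  have z_mem : MapsTo z (Icc 0 1) s := hs.mapsTo_lineMap hx hy
  have remainder_deriv : ∀ t ∈ Icc (0 : ℝ) 1,
      HasDerivWithinAt remainder ((f' (z t) - f' x) (y - x)) (Icc 0 1) t := fun t ht ↦ by
    have line_deriv := (hf (z t) (z_mem ht)).comp_hasDerivWithinAt t
      AffineMap.hasDerivWithinAt_lineMap z_mem
    exact ((line_deriv.sub_const (f x)).sub
      ((hasDerivWithinAt_id t _).smul_const (f' x (y - x)))).congr_deriv (by simp)
  have bound_deriv (t : ℝ) :
      HasDerivAt (fun t ↦ K / 2 * ‖y - x‖ ^ 2 * t ^ 2) (K * ‖y - x‖ ^ 2 * t) t :=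
    ((hasDerivAt_pow 2 t).const_mul _).congr_deriv (by ring)
  have deriv_le : ∀ t ∈ Ico (0 : ℝ) 1,
      ‖(f' (z t) - f' x) (y - x)‖ ≤ K * ‖y - x‖ ^ 2 * t := fun t ht ↦
    calc ‖(f' (z t) - f' x) (y - x)‖
        ≤ ‖f' (z t) - f' x‖ * ‖y - x‖ := ContinuousLinearMap.le_opNorm _ _
      _ ≤ K * ‖z t - x‖ * ‖y - x‖ := by
        gcongr
        exact hf'.norm_sub_le (z_mem (Ico_subset_Icc_self ht)) hx
      _ = K * ‖y - x‖ ^ 2 * t := by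
        rw [z_sub, norm_smul, Real.norm_of_nonneg ht.1]
        ring
  have remainder_le := image_norm_le_of_norm_deriv_right_le_deriv_boundary
    (fun t ht ↦ (remainder_deriv t ht).continuousWithinAt)
    (fun t ht ↦ (remainder_deriv t (Ico_subset_Icc_self ht)).mono_of_mem_nhdsWithin
      (Icc_mem_nhdsGE_of_mem ht))
    (by simp [remainder, z]) bound_deriv deriv_le (right_mem_Icc.2 zero_le_one)
  simpa [remainder, z] using remainder_le

section InnerProductSpace

variable {E : Type*} [NormedAddCommGroup E] [InnerProductSpace ℝ E]

theorem le_add_inner_add_of_lipschitzOnWith_gradient [CompleteSpace E]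
    {f : E → ℝ} {g : E → E} {s : Set E} {K : ℝ≥0} (hs : Convex ℝ s)
    (hf : ∀ z ∈ s, HasGradientWithinAt f (g z) s z) (hg : LipschitzOnWith K g s)
    {x y : E} (hx : x ∈ s) (hy : y ∈ s) :
    f y ≤ f x + ⟪g x, y - x⟫ + K / 2 * ‖y - x‖ ^ 2 := by
  have toDual_lipschitz : LipschitzOnWith K (fun z ↦ InnerProductSpace.toDual ℝ E (g z)) s :=
    fun a ha b hb ↦ by simpa only [LinearIsometryEquiv.edist_map] using hg ha hb
  have remainder_le := norm_sub_sub_fderiv_le_of_lipschitzOnWith hs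
    (fun z hz ↦ (hf z hz).hasFDerivWithinAt) toDual_lipschitz hx hy
  rw [InnerProductSpace.toDual_apply_apply] at remainder_le
  linarith [le_of_abs_le remainder_le]

theorem mul_norm_sq_sub_inner_le_of_norm_sub_le {a b : E} {c r : ℝ} (hc₀ : 0 ≤ c)
    (hc : 2 * c ≤ 1) (hab : ‖b - a‖ ≤ r * ‖a‖) :
    c * ‖b‖ ^ 2 - ⟪a, b⟫ ≤ -((1 - r) * (1 - c * (1 - r)) * ‖a‖ ^ 2) := by
  have neg_inner_le : -⟪a, b - a⟫ ≤ r * ‖a‖ ^ 2 :=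
    calc -⟪a, b - a⟫ ≤ ‖a‖ * ‖b - a‖ := (neg_le_abs _).trans (abs_real_inner_le_norm a (b - a))
      _ ≤ ‖a‖ * (r * ‖a‖) := by gcongr
      _ = r * ‖a‖ ^ 2 := by ring
  have expansion : c * ‖b‖ ^ 2 - ⟪a, b⟫ =
      (1 - 2 * c) * -⟪a, b - a⟫ + c * ‖b - a‖ ^ 2 - (1 - c) * ‖a‖ ^ 2 := by
    rw [norm_sub_sq_real, inner_sub_right, real_inner_self_eq_norm_sq, real_inner_comm a b]
    ring
  calc c * ‖b‖ ^ 2 - ⟪a, b⟫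
      = (1 - 2 * c) * -⟪a, b - a⟫ + c * ‖b - a‖ ^ 2 - (1 - c) * ‖a‖ ^ 2 := expansion
    _ ≤ (1 - 2 * c) * (r * ‖a‖ ^ 2) + c * (r * ‖a‖) ^ 2 - (1 - c) * ‖a‖ ^ 2 := by
      have := sub_nonneg.2 hc
      gcongr
    _ = -((1 - r) * (1 - c * (1 - r)) * ‖a‖ ^ 2) := by ring

theorem sam_descent_smooth_general [CompleteSpace E] {L : E → ℝ} {g : E → E} {K : ℝ≥0}
    (hg : ∀ x, HasGradientAt L (g x) x) (hLip : LipschitzWith K g)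
    {γ ρ : ℝ} (hγ₀ : 0 ≤ γ) (hγK : γ * K ≤ 1) (hρ : 0 ≤ ρ) (w : E) :
    L (w - γ • g (w + ρ • g w)) ≤
      L w - γ * (1 - ρ * K) * (1 - γ * K / 2 * (1 - ρ * K)) * ‖g w‖ ^ 2 := by
  set a := g w
  set b := g (w + ρ • a)
  have gradient_error : ‖b - a‖ ≤ ρ * K * ‖a‖ :=
    calc ‖b - a‖ ≤ K * ‖w + ρ • a - w‖ := hLip.norm_sub_le _ _
      _ = ρ * K * ‖a‖ := by
        rw [add_sub_cancel_left, norm_smul, Real.norm_of_nonneg hρ]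
        ring
  have descent : L (w - γ • b) ≤ L w + ⟪a, w - γ • b - w⟫ + K / 2 * ‖w - γ • b - w‖ ^ 2 :=
    le_add_inner_add_of_lipschitzOnWith_gradient convex_univ
      (fun z _ ↦ hasGradientWithinAt_univ.2 (hg z)) hLip.lipschitzOnWith (mem_univ w) (mem_univ _)
  calc L (w - γ • b)
      ≤ L w + ⟪a, w - γ • b - w⟫ + K / 2 * ‖w - γ • b - w‖ ^ 2 := descent
    _ = L w + γ * (γ * K / 2 * ‖b‖ ^ 2 - ⟪a, b⟫) := by
      rw [sub_sub_cancel_left, inner_neg_right, real_inner_smul_right, norm_neg, norm_smul,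
        Real.norm_of_nonneg hγ₀]
      ring
    _ ≤ L w + γ * -((1 - ρ * K) * (1 - γ * K / 2 * (1 - ρ * K)) * ‖a‖ ^ 2) := by
      gcongr
      exact mul_norm_sq_sub_inner_le_of_norm_sub_le (by positivity) (by linarith) gradient_error
    _ = L w - γ * (1 - ρ * K) * (1 - γ * K / 2 * (1 - ρ * K)) * ‖a‖ ^ 2 := by ring

end InnerProductSpace

/-- If `L : ℝ^d → ℝ` is differentiable and `β`-smooth (`β > 0`),
`0 ≤ γ ≤ 1/β` and `ρ ≥ 0`, then the full-batch SAM step `w⁺ = w − γ∇L(w + ρ∇L(w))`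
satisfies `L(w⁺) ≤ L(w) − γ(1 − ρβ)(1 − (γβ/2)(1 − ρβ))‖∇L(w)‖²`. -/
theorem sam_descent_smooth {d : ℕ}
    (L : EuclideanSpace ℝ (Fin d) → ℝ)
    (g : EuclideanSpace ℝ (Fin d) → EuclideanSpace ℝ (Fin d))
    (hg : ∀ x, HasGradientAt L (g x) x)
    (β : ℝ) (hβ : 0 < β) (hLip : LipschitzWith β.toNNReal g)
    (γ ρ : ℝ) (hγ0 : 0 ≤ γ) (hγ1 : γ ≤ 1 / β) (hρ : 0 ≤ ρ)
    (w : EuclideanSpace ℝ (Fin d)) :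
    L (w - γ • g (w + ρ • g w)) ≤
      L w - γ * (1 - ρ * β) * (1 - γ * β / 2 * (1 - ρ * β)) * ‖g w‖ ^ 2 := by
  lift β to ℝ≥0 using hβ.le
  rw [Real.toNNReal_coe] at hLip
  exact sam_descent_smooth_general hg hLip hγ0 ((le_div_iff₀ hβ).1 hγ1) hρ w
end

section
/- Let L : ℝ^d → ℝ be differentiable and β-smooth with β > 0, and let 0 < γ < 1/β and 0 ≤ ρ < 1/β. Define the full-batch SAM iterates by w_{t+1} = w_t − γ∇L(w_t + ρ∇L(w_t)) from any w_0 ∈ ℝ^d. Then for every T ≥ 1, (1/T)·∑_{t=0}^{T−1} ‖∇L(w_t)‖² ≤ (L(w_0) − L(w_T)) / (T·γ·(1 − ρβ)·(1 − (γβ/2)(1 − ρβ))). -/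
open scoped RealInnerProductSpace

/-!
Write `u = ∇L(w)` for the gradient at an iterate and `h = ∇L(w + ρu)` for the gradient that SAM
uses. The descent lemma bounds the decrease of `L` in one step below by
`γ (⟪u, h⟫ - (γβ/2) ‖h‖²)`, and smoothness places `h` in the ball of radius `ρβ‖u‖` around `u`.
As `γβ ≤ 1`, the bracket is smallest on this ball at `h = (1 - ρβ) u`; this worst case produces
the constant `(1 - ρβ)(1 - (γβ/2)(1 - ρβ))`. The decreases telescope.
-/

open scoped NNReal

section Descent

open InnerProductSpace Set

variable {E : Type*} [NormedAddCommGroup E] {K : ℝ≥0} {s : Set E} {x y : E}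

theorem norm_image_sub_sub_fderiv_le_of_lipschitzOnWith [NormedSpace ℝ E]
    {F : Type*} [NormedAddCommGroup F] [NormedSpace ℝ F] {f : E → F} {f' : E → E →L[ℝ] F}
    (hs : Convex ℝ s) (hf : ∀ z ∈ s, HasFDerivWithinAt f (f' z) s z)
    (hf' : LipschitzOnWith K f' s) (hx : x ∈ s) (hy : y ∈ s) :
    ‖f y - f x - f' x (y - x)‖ ≤ K / 2 * ‖y - x‖ ^ 2 := by
  set v := y - x with hv
  have hmaps : MapsTo (fun t : ℝ ↦ x + t • v) (Icc 0 1) s := fun t ht ↦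
    hs.add_smul_sub_mem hx hy ht
  have hline (t : ℝ) : HasDerivAt (fun t : ℝ ↦ x + t • v) v t := by
    simpa using ((hasDerivAt_id t).smul_const v).const_add x
  have hremainder : ∀ t ∈ Icc (0 : ℝ) 1,
      HasDerivWithinAt (fun t : ℝ ↦ f (x + t • v) - f x - t • f' x v)
        (f' (x + t • v) v - f' x v) (Icc 0 1) t := fun t ht ↦ by
    have hcomp := (hf _ (hmaps ht)).comp_hasDerivWithinAt t (hline t).hasDerivWithinAt hmaps
    simpa only [Function.comp_apply, one_smul] using
      (hcomp.sub_const (f x)).fun_sub ((hasDerivAt_id' t).hasDerivWithinAt.smul_const (f' x v))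
  have hquadratic (t : ℝ) :
      HasDerivAt (fun t : ℝ ↦ K / 2 * ‖v‖ ^ 2 * t ^ 2) (K * ‖v‖ ^ 2 * t) t :=
    ((hasDerivAt_pow 2 t).const_mul _).congr_deriv (by push_cast; ring)
  have hbound : ∀ t ∈ Ico (0 : ℝ) 1, ‖f' (x + t • v) v - f' x v‖ ≤ K * ‖v‖ ^ 2 * t :=
    fun t ht ↦ calc
      ‖f' (x + t • v) v - f' x v‖ ≤ ‖f' (x + t • v) - f' x‖ * ‖v‖ :=
        (f' (x + t • v) - f' x).le_opNorm v
      _ ≤ K * ‖x + t • v - x‖ * ‖v‖ := by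
        gcongr
        exact hf'.norm_sub_le (hmaps (Ico_subset_Icc_self ht)) hx
      _ = K * ‖v‖ ^ 2 * t := by
        rw [add_sub_cancel_left, norm_smul, Real.norm_of_nonneg ht.1]
        ring
  have hle := image_norm_le_of_norm_deriv_right_le_deriv_boundary
    (fun t ht ↦ (hremainder t ht).continuousWithinAt)
    (fun t ht ↦ (hremainder t (Ico_subset_Icc_self ht)).mono_of_mem_nhdsWithin
      (Icc_mem_nhdsGE_of_mem ht))
    (by simp) hquadratic hbound (right_mem_Icc.2 zero_le_one)
  simpa [hv] using hle

variable [InnerProductSpace ℝ E] [CompleteSpace E]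

theorem le_add_inner_add_sq_norm_of_lipschitzOnWith_gradient {L : E → ℝ} {g : E → E}
    (hs : Convex ℝ s) (hg : ∀ z ∈ s, HasGradientWithinAt L (g z) s z)
    (hLip : LipschitzOnWith K g s) (hx : x ∈ s) (hy : y ∈ s) :
    L y ≤ L x + ⟪g x, y - x⟫ + K / 2 * ‖y - x‖ ^ 2 := by
  have hdual : LipschitzOnWith K (toDual ℝ E ∘ g) s := by
    simpa using (toDual ℝ E).lipschitz.comp_lipschitzOnWith hLip
  have hle := (Real.le_norm_self _).trans <| norm_image_sub_sub_fderiv_le_of_lipschitzOnWith hs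
    (fun z hz ↦ (hg z hz).hasFDerivWithinAt) hdual hx hy
  rw [toDual_apply_apply] at hle
  linarith

end Descent

section SAM

variable {E : Type*} [NormedAddCommGroup E] [InnerProductSpace ℝ E]

theorem mul_sq_norm_le_inner_sub_sq_norm {u h : E} {a b : ℝ} (hb₀ : 0 ≤ b) (hb₁ : b ≤ 1)
    (hh : ‖h - u‖ ≤ a * ‖u‖) :
    (1 - a) * (1 - b / 2 * (1 - a)) * ‖u‖ ^ 2 ≤ ⟪u, h⟫ - b / 2 * ‖h‖ ^ 2 := by
  obtain ⟨e, rfl⟩ : ∃ e, h = u + e := ⟨h - u, (add_sub_cancel u h).symm⟩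
  rw [add_sub_cancel_left] at hh
  have hinner : -(‖u‖ * (a * ‖u‖)) ≤ ⟪u, e⟫ :=
    (neg_le_neg (by gcongr)).trans (neg_le_of_abs_le (abs_real_inner_le_norm u e))
  calc
    (1 - a) * (1 - b / 2 * (1 - a)) * ‖u‖ ^ 2
      = (1 - b / 2) * ‖u‖ ^ 2 + (1 - b) * -(‖u‖ * (a * ‖u‖)) - b / 2 * (a * ‖u‖) ^ 2 := by ring
    _ ≤ (1 - b / 2) * ‖u‖ ^ 2 + (1 - b) * ⟪u, e⟫ - b / 2 * ‖e‖ ^ 2 := by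
      have := sub_nonneg.2 hb₁
      gcongr
    _ = ⟪u, u + e⟫ - b / 2 * ‖u + e‖ ^ 2 := by
      rw [inner_add_right, norm_add_sq_real, real_inner_self_eq_norm_sq]
      ring

/-- One full-batch step of sharpness-aware minimization (SAM) with step size `γ` and ascent
radius `ρ`. The gradient field `g` is a parameter, and the ascent direction is not normalized. -/
def samStep (g : E → E) (γ ρ : ℝ) (x : E) : E :=
  x - γ • g (x + ρ • g x)

variable [CompleteSpace E] {L : E → ℝ} {g : E → E} {β : ℝ≥0} {γ ρ : ℝ}

theorem mul_sq_norm_gradient_le_sub_samStep (hg : ∀ x, HasGradientAt L (g x) x)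
    (hLip : LipschitzWith β g) (hγ₀ : 0 ≤ γ) (hγ₁ : γ * β ≤ 1) (hρ : 0 ≤ ρ) (x : E) :
    γ * ((1 - ρ * β) * (1 - γ * β / 2 * (1 - ρ * β))) * ‖g x‖ ^ 2 ≤
      L x - L (samStep g γ ρ x) := by
  set h := g (x + ρ • g x)
  have hclose : ‖h - g x‖ ≤ ρ * β * ‖g x‖ := calc
    ‖h - g x‖ ≤ β * ‖x + ρ • g x - x‖ := hLip.norm_sub_le _ _
    _ = ρ * β * ‖g x‖ := by
      rw [add_sub_cancel_left, norm_smul, Real.norm_of_nonneg hρ]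
      ring
  have hdescent : L (samStep g γ ρ x) ≤
      L x + ⟪g x, samStep g γ ρ x - x⟫ + β / 2 * ‖samStep g γ ρ x - x‖ ^ 2 :=
    le_add_inner_add_sq_norm_of_lipschitzOnWith_gradient convex_univ
      (fun z _ ↦ hasGradientWithinAt_univ.2 (hg z)) hLip.lipschitzOnWith (Set.mem_univ x)
      (Set.mem_univ _)
  have hstep : samStep g γ ρ x - x = -(γ • h) := sub_sub_cancel_left x (γ • h)
  rw [hstep, inner_neg_right, inner_smul_right, norm_neg, norm_smul,
    Real.norm_of_nonneg hγ₀] at hdescent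
  calc
    γ * ((1 - ρ * β) * (1 - γ * β / 2 * (1 - ρ * β))) * ‖g x‖ ^ 2
      = γ * ((1 - ρ * β) * (1 - γ * β / 2 * (1 - ρ * β)) * ‖g x‖ ^ 2) := mul_assoc ..
    _ ≤ γ * (⟪g x, h⟫ - γ * β / 2 * ‖h‖ ^ 2) := by
      gcongr
      exact mul_sq_norm_le_inner_sub_sq_norm (by positivity) hγ₁ hclose
    _ ≤ L x - L (samStep g γ ρ x) := by linarith

theorem sam_fullbatch_convergence_nonconvex_general (hg : ∀ x, HasGradientAt L (g x) x)
    (hLip : LipschitzWith β g) (hγ₀ : 0 < γ) (hγ₁ : γ * β ≤ 1) (hρ₀ : 0 ≤ ρ) (hρ₁ : ρ * β < 1)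
    {w : ℕ → E} (hrec : ∀ t, w (t + 1) = samStep g γ ρ (w t)) {T : ℕ} (hT : 1 ≤ T) :
    (1 / (T : ℝ)) * ∑ t ∈ Finset.range T, ‖g (w t)‖ ^ 2 ≤
      (L (w 0) - L (w T)) / ((T : ℝ) * γ * (1 - ρ * β) * (1 - γ * β / 2 * (1 - ρ * β))) := by
  have : (0 : ℝ) < T := Nat.cast_pos.2 hT
  have hρβ : 0 < 1 - ρ * β := sub_pos.2 hρ₁
  have hfactor : 0 < 1 - γ * β / 2 * (1 - ρ * β) := by
    have hprod : γ * β * (1 - ρ * β) ≤ 1 :=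
      mul_le_one₀ hγ₁ hρβ.le (sub_le_self 1 (by positivity))
    linarith
  rw [le_div_iff₀ (by positivity)]
  calc
    1 / (T : ℝ) * (∑ t ∈ Finset.range T, ‖g (w t)‖ ^ 2) *
        (T * γ * (1 - ρ * β) * (1 - γ * β / 2 * (1 - ρ * β)))
      = ∑ t ∈ Finset.range T,
          γ * ((1 - ρ * β) * (1 - γ * β / 2 * (1 - ρ * β))) * ‖g (w t)‖ ^ 2 := by
        rw [← Finset.mul_sum]
        field_simp
    _ ≤ ∑ t ∈ Finset.range T, (L (w t) - L (w (t + 1))) := by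
      gcongr with t
      rw [hrec t]
      exact mul_sq_norm_gradient_le_sub_samStep hg hLip hγ₀.le hγ₁ hρ₀ (w t)
    _ = L (w 0) - L (w T) := Finset.sum_range_sub' (fun t ↦ L (w t)) T

end SAM

/-- Convergence of full-batch SAM to stationary points: if `L` is
differentiable and `β`-smooth (`β > 0`), `0 < γ < 1/β`, `0 ≤ ρ < 1/β`, and the iterates
satisfy `w_{t+1} = w_t − γ∇L(w_t + ρ∇L(w_t))`, then for every `T ≥ 1`,
`(1/T)·∑_{t<T} ‖∇L(w_t)‖² ≤ (L(w_0) − L(w_T)) / (T·γ·(1 − ρβ)·(1 − (γβ/2)(1 − ρβ)))`. -/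
theorem sam_fullbatch_convergence_nonconvex {d : ℕ}
    (L : EuclideanSpace ℝ (Fin d) → ℝ)
    (g : EuclideanSpace ℝ (Fin d) → EuclideanSpace ℝ (Fin d))
    (hg : ∀ x, HasGradientAt L (g x) x)
    (β : ℝ) (hβ : 0 < β) (hLip : LipschitzWith β.toNNReal g)
    (γ ρ : ℝ) (hγ0 : 0 < γ) (hγ1 : γ < 1 / β) (hρ0 : 0 ≤ ρ) (hρ1 : ρ < 1 / β)
    (w : ℕ → EuclideanSpace ℝ (Fin d))
    (hrec : ∀ t : ℕ, w (t + 1) = w t - γ • g (w t + ρ • g (w t)))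
    (T : ℕ) (hT : 1 ≤ T) :
    (1 / (T : ℝ)) * ∑ t ∈ Finset.range T, ‖g (w t)‖ ^ 2 ≤
      (L (w 0) - L (w T)) / ((T : ℝ) * γ * (1 - ρ * β) * (1 - γ * β / 2 * (1 - ρ * β))) := by
  lift β to ℝ≥0 using hβ.le
  exact sam_fullbatch_convergence_nonconvex_general hg (Real.toNNReal_coe (r := β) ▸ hLip) hγ0
    ((lt_div_iff₀ hβ).1 hγ1).le hρ0 ((lt_div_iff₀ hβ).1 hρ1) hrec hT
end

section
/- Assume each ℓ_i is differentiable, ∇L is β-Lipschitz with β > 0, and the bounded variance condition (A1) holds with constant σ ≥ 0. Fix a batch size b ≥ 1, a point w ∈ ℝ^d, and ρ ≥ 0. Then, averaging uniformly over all pairs of batches (I, J) ∈ {1,…,n}^b × {1,…,n}^b, E_{I,J}⟨∇L_I(w + ρ∇L_J(w)), ∇L(w)⟩ ≥ (1/2 − βρ)·‖∇L(w)‖² − β²ρ²σ²/(2b). -/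
open scoped RealInnerProductSpace

/-- The full (training) loss `L(w) = (1/n) ∑ᵢ ℓᵢ(w)`. -/
noncomputable def fullLoss {d n : ℕ} (ℓ : Fin n → EuclideanSpace ℝ (Fin d) → ℝ)
    (w : EuclideanSpace ℝ (Fin d)) : ℝ :=
  (n : ℝ)⁻¹ * ∑ i, ℓ i w

/-- The full gradient `∇L(w) = (1/n) ∑ᵢ ∇ℓᵢ(w)` (given per-example gradients `g i`). -/
noncomputable def fullGrad {d n : ℕ}
    (g : Fin n → EuclideanSpace ℝ (Fin d) → EuclideanSpace ℝ (Fin d))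
    (w : EuclideanSpace ℝ (Fin d)) : EuclideanSpace ℝ (Fin d) :=
  (n : ℝ)⁻¹ • ∑ i, g i w

/-- The mini-batch gradient `∇L_J(w) = (1/b) ∑_{k<b} ∇ℓ_{J k}(w)` for a batch
`J : Fin b → Fin n` (sampling with replacement). -/
noncomputable def batchGrad {d n b : ℕ}
    (g : Fin n → EuclideanSpace ℝ (Fin d) → EuclideanSpace ℝ (Fin d))
    (J : Fin b → Fin n) (w : EuclideanSpace ℝ (Fin d)) : EuclideanSpace ℝ (Fin d) :=
  (b : ℝ)⁻¹ • ∑ k, g (J k) w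

/-!
Since the descent batch `I` is independent of the ascent batch `J`, averaging over `I` replaces
`∇L_I` by `∇L`. For fixed `J`, the point `w + ρ∇L_J(w)` lies within
`ρ(‖∇L(w)‖ + ‖∇L_J(w) - ∇L(w)‖)` of `w`, so Lipschitzness bounds the loss of alignment by
`βρ‖∇L(w)‖²` plus a cross term, which Young's inequality splits into `‖∇L(w)‖² / 2` and
`β²ρ² / 2 * ‖∇L_J(w) - ∇L(w)‖²`. Averaging the latter over `J` gives the variance of a mean of `b`
independent samples, at most `σ² / b`.
-/

open scoped BigOperators

section Expect

variable {ι κ M 𝕜 : Type*} [Semifield 𝕜] [CharZero 𝕜]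

variable (𝕜) in
theorem expect_eq_inv_card_smul_sum [AddCommMonoid M] [Module ℚ≥0 M] [Module 𝕜 M]
    [IsScalarTower ℚ≥0 𝕜 M] (s : Finset ι) (v : ι → M) :
    𝔼 i ∈ s, v i = (s.card : 𝕜)⁻¹ • ∑ i ∈ s, v i := by
  rw [Finset.expect, ← NNRat.cast_smul_eq_nnqsmul 𝕜, NNRat.cast_inv, NNRat.cast_natCast]

theorem expect_expect_eq_inv_card_mul_card_mul_sum_sum (s : Finset ι) (t : Finset κ)
    (f : ι → κ → 𝕜) :
    𝔼 i ∈ s, 𝔼 j ∈ t, f i j = ((s.card : 𝕜) * t.card)⁻¹ * ∑ i ∈ s, ∑ j ∈ t, f i j := by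
  rw [← Finset.expect_product', expect_eq_inv_card_smul_sum 𝕜, Finset.card_product, Nat.cast_mul,
    Finset.sum_product', smul_eq_mul]

end Expect

section InnerProductSpace

variable {ι E : Type*} [SeminormedAddCommGroup E] [InnerProductSpace ℝ E]

theorem half_sub_mul_norm_sq_sub_le_inner {c : ℝ} (hc : 0 ≤ c) {u m s : E}
    (hu : ‖u - m‖ ≤ c * ‖s‖) :
    (1 / 2 - c) * ‖m‖ ^ 2 - c ^ 2 / 2 * ‖s - m‖ ^ 2 ≤ ⟪u, m⟫ := by
  have hdist : ‖u - m‖ ≤ c * (‖m‖ + ‖s - m‖) :=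
    hu.trans (mul_le_mul_of_nonneg_left (norm_le_norm_add_norm_sub' s m) hc)
  have young : c * ‖s - m‖ * ‖m‖ ≤ c ^ 2 / 2 * ‖s - m‖ ^ 2 + 1 / 2 * ‖m‖ ^ 2 := by
    linarith [two_mul_le_add_sq (c * ‖s - m‖) ‖m‖]
  calc (1 / 2 - c) * ‖m‖ ^ 2 - c ^ 2 / 2 * ‖s - m‖ ^ 2
      ≤ ‖m‖ ^ 2 - c * (‖m‖ + ‖s - m‖) * ‖m‖ := by linarith
    _ ≤ ‖m‖ ^ 2 - ‖u - m‖ * ‖m‖ := by gcongr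
    _ ≤ ‖m‖ ^ 2 + ⟪u - m, m⟫ := by linarith [neg_le_of_abs_le (abs_real_inner_le_norm (u - m) m)]
    _ = ⟪u, m⟫ := by rw [inner_sub_left, real_inner_self_eq_norm_sq]; ring

variable [Module ℚ≥0 E]

theorem expect_inner (s : Finset ι) (v : ι → E) (x : E) :
    ⟪𝔼 i ∈ s, v i, x⟫ = 𝔼 i ∈ s, ⟪v i, x⟫ := by
  simp only [expect_eq_inv_card_smul_sum ℝ, real_inner_smul_left, sum_inner, smul_eq_mul]

theorem inner_expect (s : Finset ι) (v : ι → E) (x : E) :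
    ⟪x, 𝔼 i ∈ s, v i⟫ = 𝔼 i ∈ s, ⟪x, v i⟫ := by
  simp only [real_inner_comm _ x, expect_inner]

theorem norm_expect_sq_eq_expect_inner (s : Finset ι) (v : ι → E) :
    ‖𝔼 i ∈ s, v i‖ ^ 2 = 𝔼 i ∈ s, 𝔼 j ∈ s, ⟪v i, v j⟫ := by
  rw [← real_inner_self_eq_norm_sq, expect_inner]
  simp only [inner_expect]

end InnerProductSpace

section Batch

variable {ι κ : Type*} [Fintype ι] [Nonempty ι] [Fintype κ] [DecidableEq κ]

section Module

variable {M : Type*} [AddCommMonoid M] [Module ℚ≥0 M]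

theorem expect_eval (k : κ) (f : ι → M) : 𝔼 J : κ → ι, f (J k) = 𝔼 i, f i :=
  calc 𝔼 J : κ → ι, f (J k)
      = 𝔼 p : ι × ({l // l ≠ k} → ι), f p.1 :=
        Fintype.expect_equiv (Equiv.funSplitAt k ι) _ _ fun _ => rfl
    _ = 𝔼 i, f i := by
        simp only [← Finset.univ_product_univ, Finset.expect_product, Fintype.expect_const]

theorem expect_eval_eval {k l : κ} (hkl : k ≠ l) (f : ι → ι → M) :
    𝔼 J : κ → ι, f (J k) (J l) = 𝔼 i, 𝔼 j, f i j :=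
  calc 𝔼 J : κ → ι, f (J k) (J l)
      = 𝔼 p : ι × ({l // l ≠ k} → ι), f p.1 (p.2 ⟨l, hkl.symm⟩) :=
        Fintype.expect_equiv (Equiv.funSplitAt k ι) _ _ fun _ => rfl
    _ = 𝔼 i, 𝔼 j, f i j := by
        simp only [← Finset.univ_product_univ, Finset.expect_product, expect_eval]

theorem expect_batch_expect [Nonempty κ] (f : ι → M) :
    𝔼 J : κ → ι, 𝔼 k, f (J k) = 𝔼 i, f i := by
  simp only [Finset.expect_comm Finset.univ Finset.univ, expect_eval, Fintype.expect_const]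

end Module

variable {E : Type*} [SeminormedAddCommGroup E] [InnerProductSpace ℝ E] [Module ℚ≥0 E]

theorem expect_inner_eval_eval_of_expect_eq_zero {v : ι → E} (hv : 𝔼 i, v i = 0) (k l : κ) :
    𝔼 J : κ → ι, ⟪v (J k), v (J l)⟫ = if k = l then 𝔼 i, ‖v i‖ ^ 2 else 0 := by
  split_ifs with hkl
  · subst hkl
    simp only [real_inner_self_eq_norm_sq]
    exact expect_eval k fun i => ‖v i‖ ^ 2
  · rw [expect_eval_eval hkl fun i j => ⟪v i, v j⟫]
    simp only [← inner_expect, hv, inner_zero_right, Finset.expect_const_zero]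

theorem expect_norm_sq_batch_expect_of_expect_eq_zero [Nonempty κ] {v : ι → E}
    (hv : 𝔼 i, v i = 0) :
    𝔼 J : κ → ι, ‖𝔼 k, v (J k)‖ ^ 2 = (𝔼 i, ‖v i‖ ^ 2) / Fintype.card κ :=
  calc 𝔼 J : κ → ι, ‖𝔼 k, v (J k)‖ ^ 2
      = 𝔼 k : κ, 𝔼 l : κ, 𝔼 J : κ → ι, ⟪v (J k), v (J l)⟫ := by
        simp only [norm_expect_sq_eq_expect_inner]
        rw [Finset.expect_comm]
        exact Finset.expect_congr rfl fun k _ => Finset.expect_comm ..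
    _ = 𝔼 k : κ, 𝔼 l : κ, if k = l then 𝔼 i, ‖v i‖ ^ 2 else 0 := by
        simp only [expect_inner_eval_eval_of_expect_eq_zero hv]
    _ = (𝔼 i, ‖v i‖ ^ 2) / Fintype.card κ := by
        simp only [Fintype.expect_ite_eq, Fintype.expect_const]
        rw [NNRat.smul_def, NNRat.cast_inv, NNRat.cast_natCast, inv_mul_eq_div]

theorem expect_norm_sq_batch_expect_sub_expect [Nonempty κ] (v : ι → E) :
    𝔼 J : κ → ι, ‖𝔼 k, v (J k) - 𝔼 i, v i‖ ^ 2 =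
      (𝔼 i, ‖v i - 𝔼 j, v j‖ ^ 2) / Fintype.card κ := by
  have hcentered : 𝔼 i, (v i - 𝔼 j, v j) = 0 := by
    rw [Finset.expect_sub_distrib, Fintype.expect_const, sub_self]
  rw [← expect_norm_sq_batch_expect_of_expect_eq_zero hcentered]
  simp only [Finset.expect_sub_distrib, Fintype.expect_const]

end Batch

section Euclidean

variable {d n b : ℕ} (g : Fin n → EuclideanSpace ℝ (Fin d) → EuclideanSpace ℝ (Fin d))

theorem fullGrad_eq_expect (w : EuclideanSpace ℝ (Fin d)) : fullGrad g w = 𝔼 i, g i w := by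
  rw [fullGrad, expect_eq_inv_card_smul_sum ℝ, Finset.card_fin]

theorem batchGrad_eq_expect (J : Fin b → Fin n) (w : EuclideanSpace ℝ (Fin d)) :
    batchGrad g J w = 𝔼 k, g (J k) w := by
  rw [batchGrad, expect_eq_inv_card_smul_sum ℝ, Finset.card_fin]

end Euclidean

theorem nsam_stochastic_alignment_general {ι κ₁ κ₂ E : Type*}
    [Fintype ι] [Nonempty ι] [Fintype κ₁] [DecidableEq κ₁] [Nonempty κ₁]
    [Fintype κ₂] [DecidableEq κ₂] [Nonempty κ₂]
    [NormedAddCommGroup E] [InnerProductSpace ℝ E] [CompleteSpace E] [Module ℚ≥0 E]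
    (ℓ : ι → E → ℝ) (g : ι → E → E) (hg : ∀ i x, HasGradientAt (ℓ i) (g i x) x)
    {β : ℝ} (hβ : 0 ≤ β) (w : E)
    (hLip : ∀ x, ‖𝔼 i, g i x - 𝔼 i, g i w‖ ≤ β * ‖x - w‖)
    {σ : ℝ} (hvar : 𝔼 i, ‖g i w - 𝔼 j, g j w‖ ^ 2 ≤ σ ^ 2) (ρ : ℝ) :
    (1 / 2 - β * |ρ|) * ‖𝔼 i, g i w‖ ^ 2 - β ^ 2 * ρ ^ 2 * σ ^ 2 / (2 * Fintype.card κ₂) ≤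
      𝔼 I : κ₁ → ι, 𝔼 J : κ₂ → ι,
        ⟪𝔼 k, g (I k) (w + ρ • 𝔼 l, g (J l) w), 𝔼 i, g i w⟫ := by
  set m := 𝔼 i, g i w
  set s : (κ₂ → ι) → E := fun J => 𝔼 l, g (J l) w
  have hdrift (J : κ₂ → ι) :
      ‖𝔼 i, g i (w + ρ • s J) - m‖ ≤ β * |ρ| * ‖s J‖ := by
    simpa only [add_sub_cancel_left, norm_smul, Real.norm_eq_abs, mul_assoc] using
      hLip (w + ρ • s J)
  have hspread : 𝔼 J, ‖s J - m‖ ^ 2 ≤ σ ^ 2 / Fintype.card κ₂ := by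
    rw [expect_norm_sq_batch_expect_sub_expect fun i => g i w]
    gcongr
  have hunbiased (x : E) : 𝔼 I : κ₁ → ι, ⟪𝔼 k, g (I k) x, m⟫ = ⟪𝔼 i, g i x, m⟫ := by
    rw [← expect_inner, expect_batch_expect fun i => g i x]
  calc (1 / 2 - β * |ρ|) * ‖m‖ ^ 2 - β ^ 2 * ρ ^ 2 * σ ^ 2 / (2 * Fintype.card κ₂)
      = (1 / 2 - β * |ρ|) * ‖m‖ ^ 2 - (β * |ρ|) ^ 2 / 2 * (σ ^ 2 / Fintype.card κ₂) := by
        rw [mul_pow, sq_abs]; ring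
    _ ≤ (1 / 2 - β * |ρ|) * ‖m‖ ^ 2 - (β * |ρ|) ^ 2 / 2 * 𝔼 J, ‖s J - m‖ ^ 2 := by gcongr
    _ = 𝔼 J, ((1 / 2 - β * |ρ|) * ‖m‖ ^ 2 - (β * |ρ|) ^ 2 / 2 * ‖s J - m‖ ^ 2) := by
        rw [Finset.expect_sub_distrib, Fintype.expect_const, Finset.mul_expect]
    _ ≤ 𝔼 J, ⟪𝔼 i, g i (w + ρ • s J), m⟫ :=
        Finset.expect_le_expect fun J _ =>
          half_sub_mul_norm_sq_sub_le_inner (by positivity) (hdrift J)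
    _ = 𝔼 I : κ₁ → ι, 𝔼 J, ⟪𝔼 k, g (I k) (w + ρ • s J), m⟫ := by
        simp only [← hunbiased]
        exact Finset.expect_comm ..

/-- Alignment of the stochastic n-SAM direction (different batches `I`, `J`
for the descent and ascent steps) with the full gradient: under bounded variance (A1) and
`β`-Lipschitzness of `∇L`, for every `w` and `ρ ≥ 0`, averaging uniformly over all pairs of
batches `(I, J) ∈ ({1,…,n}^b)²`,
`E⟨∇L_I(w + ρ∇L_J(w)), ∇L(w)⟩ ≥ (1/2 − βρ)‖∇L(w)‖² − β²ρ²σ²/(2b)`. -/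
theorem nsam_stochastic_alignment {d n b : ℕ} (hn : 0 < n) (hb : 1 ≤ b)
    (ℓ : Fin n → EuclideanSpace ℝ (Fin d) → ℝ)
    (g : Fin n → EuclideanSpace ℝ (Fin d) → EuclideanSpace ℝ (Fin d))
    (hg : ∀ i x, HasGradientAt (ℓ i) (g i x) x)
    (β : ℝ) (hβ : 0 < β) (hLip : LipschitzWith β.toNNReal (fullGrad g))
    (σ : ℝ) (hσ : 0 ≤ σ)
    (hvar : ∀ x, (n : ℝ)⁻¹ * ∑ i, ‖g i x - fullGrad g x‖ ^ 2 ≤ σ ^ 2)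
    (w : EuclideanSpace ℝ (Fin d)) (ρ : ℝ) (hρ : 0 ≤ ρ) :
    (1 / 2 - β * ρ) * ‖fullGrad g w‖ ^ 2 - β ^ 2 * ρ ^ 2 * σ ^ 2 / (2 * b) ≤
      ((n : ℝ) ^ b * (n : ℝ) ^ b)⁻¹ *
        ∑ I : Fin b → Fin n, ∑ J : Fin b → Fin n,
          ⟪batchGrad g I (w + ρ • batchGrad g J w), fullGrad g w⟫ := by
  have : Nonempty (Fin n) := Fin.pos_iff_nonempty.mp hn
  have : Nonempty (Fin b) := Fin.pos_iff_nonempty.mp hb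
  have hLip_at (x) : ‖fullGrad g x - fullGrad g w‖ ≤ β * ‖x - w‖ := by
    simpa only [Real.coe_toNNReal β hβ.le] using hLip.norm_sub_le x w
  have hvar_at : 𝔼 i, ‖g i w - fullGrad g w‖ ^ 2 ≤ σ ^ 2 := by
    simpa only [expect_eq_inv_card_smul_sum ℝ, Finset.card_fin, smul_eq_mul] using hvar w
  have hcard : (Finset.univ : Finset (Fin b → Fin n)).card = (n : ℝ) ^ b := by simp
  rw [← hcard, ← expect_expect_eq_inv_card_mul_card_mul_sum_sum]
  simp only [fullGrad_eq_expect, batchGrad_eq_expect] at hLip_at hvar_at ⊢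
  simpa only [abs_of_nonneg hρ, Fintype.card_fin] using
    nsam_stochastic_alignment_general (κ₁ := Fin b) (κ₂ := Fin b) ℓ g hg hβ.le w hLip_at hvar_at ρ
end
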